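/- Suppose p = b+1 (so m = 0 and S = ∅ is the only admissible set). If E ⊆ {1,…,ℓ} satisfies 1 ≤ #E < ℓ, then ρ(g·φ_{∅,E}) = 0. -/

import Mathlib

open Finset MvPolynomial

noncomputable section

/-- Value of the elementary symmetric polynomial `e_k` at the family `v` restricted to `A`. -/
def esymVal {α F : Type*} [DecidableEq α] [CommRing F] (A : Finset α) (k : ℕ) (v : α → F) : F :=
  ∑ B ∈ A.powersetCard k, ∏ i ∈ B, v i

/-- Pochhammer symbol `(a)_k = a (a+1) ⋯ (a+k-1)`. -/
def poch (a : ℚ) (k : ℕ) : ℚ := ∏ i ∈ Finset.range k, (a + (i : ℚ))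

variable {p : ℕ}

/-- The index in `Fin (∑ t, n t)` of the `i`-th element of the `j`-th consecutive block. -/
def emb (n : Fin p → ℕ) (j : Fin p) (i : Fin (n j)) : Fin (∑ t, n t) :=
  ⟨(∑ t ∈ Finset.univ.filter (fun t => t < j), n t) + i, by
    have hj : j ∉ Finset.univ.filter (fun t => t < j) := by simp
    have h2 : ∑ t ∈ insert j (Finset.univ.filter (fun t => t < j)), n t ≤ ∑ t, n t :=
      Finset.sum_le_sum_of_subset (Finset.subset_univ _)
    rw [Finset.sum_insert hj] at h2
    have := i.isLt
    omega⟩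

/-- The Young subgroup: permutations mapping each block onto itself. -/
def youngGroup (n : Fin p → ℕ) : Finset (Equiv.Perm (Fin (∑ t, n t))) :=
  Finset.univ.filter fun w => ∀ (j : Fin p) (i : Fin (n j)), ∃ i' : Fin (n j),
    w (emb n j i) = emb n j i'

/-- The action of a permutation of the variables on polynomials, as a linear map. -/
def permAct {σ : Type*} (w : Equiv.Perm σ) :
    MvPolynomial σ ℚ →ₗ[ℚ] MvPolynomial σ ℚ :=
  (MvPolynomial.rename ⇑w).toLinearMap

/-- Averaging operator over the Young subgroup. -/
def rho (n : Fin p → ℕ) :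
    MvPolynomial (Fin (∑ t, n t)) ℚ →ₗ[ℚ] MvPolynomial (Fin (∑ t, n t)) ℚ :=
  ((youngGroup n).card : ℚ)⁻¹ • ∑ h ∈ youngGroup n, permAct h

/-- The alternating (Vandermonde) polynomial in the variables `x_{t 0}, …, x_{t b}`. -/
def Delta {N b : ℕ} (t : Fin (b + 1) → Fin N) : MvPolynomial (Fin N) ℚ :=
  ∏ q ∈ Finset.univ.filter (fun q : Fin (b + 1) × Fin (b + 1) => q.1 < q.2),
    (X (t q.1) - X (t q.2))

/-- The span of all `Δ(x_{i₁},…,x_{i_{b+1}})` with `i₁ < ⋯ < i_{b+1}`. -/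
def hookSpan (N b : ℕ) : Submodule ℚ (MvPolynomial (Fin N) ℚ) :=
  Submodule.span ℚ {f | ∃ t : Fin (b + 1) → Fin N, StrictMono t ∧ f = Delta t}

/-- The first `ℓ` block labels. -/
def firstL (p ℓ : ℕ) : Finset (Fin p) := Finset.univ.filter fun i => (i : ℕ) < ℓ


/-- The `(b+1)`-tuple of variable indices with block labels the elements of `J` in increasing
order, and coordinate inside block `j` chosen by `c`. -/
def tupleOf (n : Fin p → ℕ) {b : ℕ} (J : Finset (Fin p)) (hJ : J.card = b + 1)
    (c : ∀ j : ↥J, Fin (n j.1)) : Fin (b + 1) → Fin (∑ t, n t) :=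
  fun r => emb n (J.orderIsoOfFin hJ r).1 (c (J.orderIsoOfFin hJ r))

/-- The invariant polynomial `ξ_S`, where `J` is the complement of `S` (with `p` adjoined):
the sum of `Δ(x)` over all tuples with block labels `J` in increasing order. -/
def xiS (n : Fin p → ℕ) {b : ℕ} (J : Finset (Fin p)) (hJ : J.card = b + 1) :
    MvPolynomial (Fin (∑ t, n t)) ℚ :=
  ∑ c : (∀ j : ↥J, Fin (n j.1)), Delta (tupleOf n J hJ c)

/-- The partial sum `φ_{S,E}` of `ξ_S`: only tuples whose coordinate in block `j` is the first
one for `j ∈ E`, and is not the first one for `j ∉ E` with `j` among the first `ℓ` blocks. -/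
def phiSE (n : Fin p → ℕ) {b : ℕ} (ℓ : ℕ) (J E : Finset (Fin p)) (hJ : J.card = b + 1) :
    MvPolynomial (Fin (∑ t, n t)) ℚ :=
  ∑ c ∈ Finset.univ.filter (fun c : ∀ j : ↥J, Fin (n j.1) =>
      ∀ j : ↥J, (j.1 ∈ E → (c j : ℕ) = 0) ∧ ((j.1 : ℕ) < ℓ → j.1 ∉ E → (c j : ℕ) ≠ 0)),
    Delta (tupleOf n J hJ c)

/-!
Since `E` contains some but not all of `1, …, ℓ`, going once around the `ℓ`-cycle one finds a block
`j ∈ E` whose successor `k` is not in `E`. Every tuple occurring in `φ_{S,E}` contains the first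
index of block `j`, which `g` moves into block `k`, and an index of block `k` other than the first,
which `g` fixes. Hence each summand of `g·φ_{S,E}` is a Vandermonde polynomial in which two
variables come from the same block. The transposition of these two variables lies in the Young
subgroup and negates the summand, so `ρ` kills it.
-/

/-- The block label `j` of an index `emb n j i`, read off from the enumeration `finSigmaFinEquiv`
of all pairs `(j, i)`. -/
def block (n : Fin p → ℕ) (a : Fin (∑ t, n t)) : Fin p := (finSigmaFinEquiv.symm a).1

section Blocks

variable (n : Fin p → ℕ)

theorem emb_eq_finSigmaFinEquiv (j : Fin p) (i : Fin (n j)) :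
    emb n j i = finSigmaFinEquiv ⟨j, i⟩ := by
  have hlt : univ.filter (fun t => t < j) = univ.map (Fin.castLEEmb j.2.le) := by
    ext t
    simp only [mem_filter, mem_univ, true_and, mem_map, Fin.castLEEmb_apply]
    exact ⟨fun h => ⟨⟨t, h⟩, rfl⟩, by rintro ⟨i, rfl⟩; exact i.2⟩
  ext
  simp only [emb, hlt, sum_map, Fin.castLEEmb_apply, finSigmaFinEquiv_apply]

@[simp]
theorem block_emb (j : Fin p) (i : Fin (n j)) : block n (emb n j i) = j := by
  rw [emb_eq_finSigmaFinEquiv, block, Equiv.symm_apply_apply]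

theorem exists_emb_eq_iff {j : Fin p} {a : Fin (∑ t, n t)} :
    (∃ i, a = emb n j i) ↔ block n a = j := by
  constructor
  · rintro ⟨i, rfl⟩
    exact block_emb n j i
  · rintro rfl
    obtain ⟨⟨j, i⟩, rfl⟩ := finSigmaFinEquiv.surjective a
    rw [← emb_eq_finSigmaFinEquiv, block_emb]
    exact ⟨i, rfl⟩

theorem emb_eq_emb_iff {j j' : Fin p} {i : Fin (n j)} {i' : Fin (n j')} :
    emb n j i = emb n j' i' ↔ (⟨j, i⟩ : (j : Fin p) × Fin (n j)) = ⟨j', i'⟩ := by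
  rw [emb_eq_finSigmaFinEquiv, emb_eq_finSigmaFinEquiv, EmbeddingLike.apply_eq_iff_eq]

end Blocks

section YoungGroup

variable {n : Fin p → ℕ}

theorem mem_youngGroup_iff {w : Equiv.Perm (Fin (∑ t, n t))} :
    w ∈ youngGroup n ↔ ∀ a, block n (w a) = block n a := by
  simp only [youngGroup, mem_filter, mem_univ, true_and, exists_emb_eq_iff]
  constructor
  · intro h a
    obtain ⟨i, hi⟩ : ∃ i, a = emb n (block n a) i := (exists_emb_eq_iff n).mpr rfl
    rw [hi, h, block_emb]
  · intro h j i
    rw [h, block_emb]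

theorem swap_mem_youngGroup {a a' : Fin (∑ t, n t)} (h : block n a = block n a') :
    Equiv.swap a a' ∈ youngGroup n := by
  rw [mem_youngGroup_iff]
  intro x
  rw [Equiv.swap_apply_def]
  split_ifs with hx hx'
  · rw [hx, h]
  · rw [hx', h]
  · rfl

theorem mul_mem_youngGroup_iff {v w : Equiv.Perm (Fin (∑ t, n t))} (hw : w ∈ youngGroup n) :
    v * w ∈ youngGroup n ↔ v ∈ youngGroup n := by
  rw [mem_youngGroup_iff] at hw
  simp only [mem_youngGroup_iff, Equiv.Perm.mul_apply]
  rw [← w.forall_congr_right (q := fun a => block n (v a) = block n a)]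
  simp only [hw]

theorem permAct_mul {σ : Type*} (v w : Equiv.Perm σ) (f : MvPolynomial σ ℚ) :
    permAct (v * w) f = permAct v (permAct w f) :=
  (rename_rename w v f).symm

theorem rho_permAct {w : Equiv.Perm (Fin (∑ t, n t))} (hw : w ∈ youngGroup n)
    (f : MvPolynomial (Fin (∑ t, n t)) ℚ) : rho n (permAct w f) = rho n f := by
  simp only [rho, LinearMap.smul_apply, LinearMap.sum_apply, ← permAct_mul]
  congr 1
  exact sum_equiv (Equiv.mulRight w) (fun _ => (mul_mem_youngGroup_iff hw).symm) fun _ _ => rfl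

theorem rho_eq_zero_of_permAct_eq_neg {w : Equiv.Perm (Fin (∑ t, n t))} (hw : w ∈ youngGroup n)
    {f : MvPolynomial (Fin (∑ t, n t)) ℚ} (hf : permAct w f = -f) :
    rho n f = 0 :=
  self_eq_neg.mp (by rw [← map_neg, ← hf, rho_permAct hw])

end YoungGroup

section Vandermonde

variable {N b : ℕ} (t : Fin (b + 1) → Fin N)

theorem permAct_Delta (w : Equiv.Perm (Fin N)) : permAct w (Delta t) = Delta (w ∘ t) := by
  simp [permAct, Delta, map_prod]

/-- The signs are there because Mathlib's determinant is `∏ i < j, (v j - v i)`. -/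
theorem Delta_eq_det_vandermonde :
    Delta t = (Matrix.vandermonde fun r => -(X (t r) : MvPolynomial (Fin N) ℚ)).det := by
  rw [Matrix.det_vandermonde, Delta, prod_filter, Fintype.prod_prod_type]
  refine prod_congr rfl fun r _ => ?_
  rw [← prod_filter, filter_lt_eq_Ioi]
  exact prod_congr rfl fun s _ => by ring

theorem Delta_comp_perm (σ : Equiv.Perm (Fin (b + 1))) :
    Delta (t ∘ σ) = Equiv.Perm.sign σ * Delta t := by
  rw [Delta_eq_det_vandermonde, Delta_eq_det_vandermonde, ← Matrix.det_permute]
  rfl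

variable {t}

theorem Delta_eq_zero_of_not_injective (ht : ¬ Function.Injective t) : Delta t = 0 := by
  contrapose! ht
  rw [Delta_eq_det_vandermonde, Matrix.det_vandermonde_ne_zero_iff] at ht
  exact fun r s h => ht (congrArg (fun i => -X i) h)

theorem permAct_swap_Delta (ht : Function.Injective t) {r s : Fin (b + 1)} (hrs : r ≠ s) :
    permAct (Equiv.swap (t r) (t s)) (Delta t) = -Delta t := by
  have hcomp : Equiv.swap (t r) (t s) ∘ t = t ∘ Equiv.swap r s :=
    funext fun q => (ht.map_swap r s q).symm
  rw [permAct_Delta, hcomp, Delta_comp_perm, Equiv.Perm.sign_swap hrs]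
  simp

end Vandermonde

theorem rho_Delta_eq_zero_of_block_eq {n : Fin p → ℕ} {b : ℕ} {t : Fin (b + 1) → Fin (∑ t, n t)}
    {r s : Fin (b + 1)} (hrs : r ≠ s) (h : block n (t r) = block n (t s)) :
    rho n (Delta t) = 0 := by
  by_cases ht : Function.Injective t
  · exact rho_eq_zero_of_permAct_eq_neg (swap_mem_youngGroup h) (permAct_swap_Delta ht hrs)
  · rw [Delta_eq_zero_of_not_injective ht, map_zero]

section PartialSums

variable {n : Fin p → ℕ} {b ℓ : ℕ} {J E : Finset (Fin p)}

theorem tupleOf_orderIsoOfFin_symm (hJ : J.card = b + 1) (c : ∀ j : J, Fin (n j)) (j : J) :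
    tupleOf n J hJ c ((J.orderIsoOfFin hJ).symm j) = emb n j (c j) := by
  rw [tupleOf, OrderIso.apply_symm_apply]

theorem rho_permAct_phiSE_eq_zero (hJ : J.card = b + 1) {j k : Fin p} (hjJ : j ∈ J) (hkJ : k ∈ J)
    (hjE : j ∈ E) (hkE : k ∉ E) (hkℓ : (k : ℕ) < ℓ) {w : Equiv.Perm (Fin (∑ t, n t))}
    (hj : ∀ i : Fin (n j), (i : ℕ) = 0 → block n (w (emb n j i)) = k)
    (hk : ∀ i : Fin (n k), (i : ℕ) ≠ 0 → block n (w (emb n k i)) = k) :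
    rho n (permAct w (phiSE n ℓ J E hJ)) = 0 := by
  rw [phiSE, map_sum, map_sum]
  refine sum_eq_zero fun c hc => ?_
  have hcj : (c ⟨j, hjJ⟩ : ℕ) = 0 := ((mem_filter.mp hc).2 ⟨j, hjJ⟩).1 hjE
  have hck : (c ⟨k, hkJ⟩ : ℕ) ≠ 0 := ((mem_filter.mp hc).2 ⟨k, hkJ⟩).2 hkℓ hkE
  have hjk : (⟨j, hjJ⟩ : J) ≠ ⟨k, hkJ⟩ := fun h => hkE (Subtype.mk.inj h ▸ hjE)
  rw [permAct_Delta]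
  refine rho_Delta_eq_zero_of_block_eq ((J.orderIsoOfFin hJ).symm.injective.ne hjk) ?_
  simp only [Function.comp_apply, tupleOf_orderIsoOfFin_symm]
  rw [hj _ hcj, hk _ hck]

end PartialSums

section Cycle

theorem mem_firstL {ℓ : ℕ} {j : Fin p} : j ∈ firstL p ℓ ↔ (j : ℕ) < ℓ := by simp [firstL]

theorem card_firstL {ℓ : ℕ} (h : ℓ ≤ p) : (firstL p ℓ).card = ℓ := by
  rw [firstL, Fin.card_filter_val_lt, min_eq_right h]

theorem exists_mem_add_one_notMem {ℓ : ℕ} [NeZero ℓ] {A : Set (Fin ℓ)} {x y : Fin ℓ} (hx : x ∈ A)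
    (hy : y ∉ A) : ∃ i ∈ A, i + 1 ∉ A := by
  by_contra! h
  have hxy : (· + 1)^[(y - x).val] x ∈ A := Set.MapsTo.iterate h _ hx
  have hsmul : (y - x).val • (1 : Fin ℓ) = y - x := by
    open scoped Fin.CommRing in rw [nsmul_one, Fin.cast_val_eq_self]
  exact hy (by simpa [hsmul] using hxy)

theorem exists_mem_firstL_cyclic_succ_notMem {ℓ : ℕ} (hℓp : ℓ ≤ p) {E : Finset (Fin p)}
    (hE : ∃ j ∈ firstL p ℓ, j ∈ E) (hE' : ∃ k ∈ firstL p ℓ, k ∉ E) :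
    ∃ j ∈ firstL p ℓ, ∃ k ∈ firstL p ℓ, j ∈ E ∧ k ∉ E ∧
      ((k : ℕ) = j + 1 ∨ (j : ℕ) = ℓ - 1 ∧ (k : ℕ) = 0) := by
  simp only [mem_firstL] at *
  obtain ⟨x, hxℓ, hx⟩ := hE
  obtain ⟨y, hyℓ, hy⟩ := hE'
  obtain ⟨ℓ, rfl⟩ := Nat.exists_eq_add_one_of_ne_zero (Nat.ne_zero_of_lt hxℓ)
  obtain ⟨i, hi, hi'⟩ := exists_mem_add_one_notMem (A := {i | Fin.castLE hℓp i ∈ E})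
    (x := ⟨x, hxℓ⟩) (y := ⟨y, hyℓ⟩) hx hy
  refine ⟨_, i.2, _, (i + 1).2, hi, hi', ?_⟩
  simp only [Fin.val_castLE, Fin.val_add_one]
  split_ifs with hlast
  · simp [hlast]
  · exact .inl rfl

end Cycle

theorem rho_g_phi_eq_zero_general {b ℓ : ℕ} (n : Fin p → ℕ) (hn : ∀ j, 0 < n j) (hℓp : ℓ ≤ p)
    (g : Equiv.Perm (Fin (∑ t, n t)))
    (hg1 : ∀ j k : Fin p, (k : ℕ) = (j : ℕ) + 1 → (k : ℕ) < ℓ →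
      g (emb n j ⟨0, hn j⟩) = emb n k ⟨0, hn k⟩)
    (hg2 : ∀ j j' : Fin p, (j : ℕ) = ℓ - 1 → (j' : ℕ) = 0 →
      g (emb n j ⟨0, hn j⟩) = emb n j' ⟨0, hn j'⟩)
    (hg3 : ∀ a, (∀ j : Fin p, (j : ℕ) < ℓ → a ≠ emb n j ⟨0, hn j⟩) → g a = a)
    {J : Finset (Fin p)} (hJ : J.card = b + 1) (hℓJ : firstL p ℓ ⊆ J)
    {E : Finset (Fin p)} (hE : ∃ j ∈ firstL p ℓ, j ∈ E) (hE' : ∃ k ∈ firstL p ℓ, k ∉ E) :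
    rho n (permAct g (phiSE n ℓ J E hJ)) = 0 := by
  obtain ⟨j, hj, k, hk, hjE, hkE, hjk⟩ := exists_mem_firstL_cyclic_succ_notMem hℓp hE hE'
  have hkℓ : (k : ℕ) < ℓ := mem_firstL.mp hk
  have hgj : g (emb n j ⟨0, hn j⟩) = emb n k ⟨0, hn k⟩ :=
    hjk.elim (fun h => hg1 j k h hkℓ) fun h => hg2 j k h.1 h.2
  refine rho_permAct_phiSE_eq_zero hJ (hℓJ hj) (hℓJ hk) hjE hkE hkℓ (fun i hi => ?_) fun i hi => ?_
  · obtain rfl : i = ⟨0, hn j⟩ := Fin.ext hi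
    rw [hgj, block_emb]
  · have hfix : g (emb n k i) = emb n k i := by
      refine hg3 _ fun j' _ h => hi ?_
      obtain ⟨rfl, h⟩ := Sigma.mk.inj ((emb_eq_emb_iff n).mp h)
      rw [eq_of_heq h]
    rw [hfix, block_emb]

/-- Proposition 4.1: in the case `p = b+1` (so `S = ∅` and `J = univ`), if `1 ≤ #E < ℓ`
then `ρ(g·φ_{∅,E}) = 0`. -/
theorem rho_g_phi_eq_zero (p b ℓ : ℕ) (n : Fin p → ℕ) (hn : ∀ j, 0 < n j)
    (hp : p = b + 1) (hℓ2 : 2 ≤ ℓ) (hℓp : ℓ ≤ p)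
    (g : Equiv.Perm (Fin (∑ t, n t)))
    (hg1 : ∀ j k : Fin p, (k : ℕ) = (j : ℕ) + 1 → (k : ℕ) < ℓ →
      g (emb n j ⟨0, hn j⟩) = emb n k ⟨0, hn k⟩)
    (hg2 : ∀ j j' : Fin p, (j : ℕ) = ℓ - 1 → (j' : ℕ) = 0 →
      g (emb n j ⟨0, hn j⟩) = emb n j' ⟨0, hn j'⟩)
    (hg3 : ∀ a, (∀ j : Fin p, (j : ℕ) < ℓ → a ≠ emb n j ⟨0, hn j⟩) → g a = a)
    (hJ : (Finset.univ : Finset (Fin p)).card = b + 1)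
    (E : Finset (Fin p)) (hE : ∀ j ∈ E, (j : ℕ) < ℓ)
    (hE1 : 1 ≤ E.card) (hE2 : E.card < ℓ) :
    rho n (permAct g (phiSE n ℓ Finset.univ E hJ)) = 0 := by
  obtain ⟨j, hj⟩ := card_pos.mp hE1
  exact rho_g_phi_eq_zero_general n hn hℓp g hg1 hg2 hg3 hJ (subset_univ _)
    ⟨j, mem_firstL.mpr (hE j hj), hj⟩
    (exists_mem_notMem_of_card_lt_card (hE2.trans_eq (card_firstL hℓp).symm))

end
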